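/- Let c ∈ ℂ with Re c > 0, and let (δ_n)_{n∈ℤ} be a sequence of real numbers such that |δ_n| ≤ δ for all n ∈ ℤ, for some constant δ < 1/2. Then Λ = {n + δ_n : n ∈ ℤ} is a complete interpolating sequence for the Gaussian shift-invariant space V²_c. -/

import Mathlib

open Filter MeasureTheory

/-- `gaussShiftSum c coef x = ∑_{n∈ℤ} coef n · e^{-c(x-n)²}`, the generic element of the
Gaussian shift-invariant space `V²_c`. -/
noncomputable def gaussShiftSum (c : ℂ) (coef : ℤ → ℂ) (x : ℝ) : ℂ :=
  ∑' n : ℤ, coef n * Complex.exp (-c * ((x : ℂ) - (n : ℂ)) ^ 2)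

/-- A set `Λ ⊆ ℝ` is separated if distinct points are at distance at least some `ε > 0`. -/
def IsSeparatedSet (Λ : Set ℝ) : Prop :=
  ∃ ε > 0, ∀ x ∈ Λ, ∀ y ∈ Λ, x ≠ y → ε ≤ |x - y|

/-- `Λ` is a sampling sequence for `V²_c`:
`A‖f‖² ≤ ∑_{λ∈Λ} |f(λ)|² ≤ B‖f‖²`, where `‖f‖²_{V²} = ∑ |c_n|²`. -/
def IsSamplingV2 (c : ℂ) (Λ : Set ℝ) : Prop :=
  ∃ A > 0, ∃ B > 0, ∀ coef : ℤ → ℂ, Summable (fun n => ‖coef n‖ ^ 2) →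
    A * (∑' n : ℤ, ‖coef n‖ ^ 2) ≤ (∑' lam : Λ, ‖gaussShiftSum c coef (lam : ℝ)‖ ^ 2) ∧
    (∑' lam : Λ, ‖gaussShiftSum c coef (lam : ℝ)‖ ^ 2) ≤ B * (∑' n : ℤ, ‖coef n‖ ^ 2)

/-- `Λ` is an interpolating sequence for `V²_c`: every `ℓ²` data on `Λ` is interpolated by
some `f ∈ V²_c`. -/
def IsInterpolatingV2 (c : ℂ) (Λ : Set ℝ) : Prop :=
  ∀ a : Λ → ℂ, Summable (fun lam => ‖a lam‖ ^ 2) →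
    ∃ coef : ℤ → ℂ, Summable (fun n => ‖coef n‖ ^ 2) ∧
      ∀ lam : Λ, gaussShiftSum c coef (lam : ℝ) = a lam

/-- A complete interpolating sequence is one that is both sampling and interpolating. -/
def IsCompleteInterpolatingV2 (c : ℂ) (Λ : Set ℝ) : Prop :=
  IsSamplingV2 c Λ ∧ IsInterpolatingV2 c Λ

/-!
The samples of `∑ a_k e^{-c(x-k)²}` at the points `ν_n = n + δ_n` are `A a` for the matrix
`A_{nk} = e^{-c(ν_n-k)²} = e^{-cν_n²} z_n^k e^{-ck²}`, `z_n = e^{2cν_n}`, so everything reduces to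
the bijectivity of `A` on `ℓ²`. Up to diagonal factors a finite section of `A` is a Vandermonde
matrix, and its inverse consists of coefficients of Lagrange polynomials. Since the moduli `|z_n|`
grow geometrically, `|z_i| + |z_j|` and `|z_i - z_j|` may be replaced by `max |z_i| |z_j|` at the
cost of factors whose product is bounded uniformly in the section. What remains of the `(k, n)`
entry of the inverse is the exponential of a difference of energies, which drops by at least
`Re c · (1 - 2d)` with every step away from the diagonal; this is where `d < 1/2` enters. Hence the
inverse sections are uniformly bounded on `ℓ²`, which bounds `A` and its adjoint from below.
-/

section Reindex

variable {ι κ E : Type*} [NormedAddCommGroup E] {p : ENNReal}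

theorem memℓp_comp_equiv (e : ι ≃ κ) {f : κ → E} (hf : Memℓp f p) : Memℓp (f ∘ e) p := by
  obtain rfl | rfl | hp := p.trichotomy
  · exact memℓp_zero (hf.finite_dsupport.preimage e.injective.injOn)
  · exact memℓp_infty (hf.bddAbove.mono (Set.range_comp_subset_range e fun k => ‖f k‖))
  · exact memℓp_gen (e.summable_iff.2 (hf.summable hp))

variable (p) (𝕜 : Type*) [NontriviallyNormedField 𝕜] [NormedSpace 𝕜 E] [Fact (1 ≤ p)]

/-- Composition with a bijection of the index sets, as a bounded operator between `ℓᵖ` spaces. -/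
noncomputable def lpCompEquiv (e : ι ≃ κ) :
    lp (fun _ : κ => E) p →L[𝕜] lp (fun _ : ι => E) p :=
  LinearMap.mkContinuous
    { toFun := fun x => ⟨x ∘ e, memℓp_comp_equiv e x.2⟩
      map_add' := fun _ _ => rfl
      map_smul' := fun _ _ => rfl }
    1 fun x => by
      rw [one_mul]
      obtain rfl | hp := p.dichotomy
      · exact lp.norm_le_of_forall_le (norm_nonneg x) fun i =>
          lp.norm_apply_le_norm (by simp) x (e i)
      · have hp₀ : 0 < p.toReal := by linarith
        refine lp.norm_le_of_tsum_le hp₀ (norm_nonneg x) ?_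
        rw [lp.norm_rpow_eq_tsum hp₀]
        exact (e.tsum_eq fun k => ‖x k‖ ^ p.toReal).le

theorem norm_lpCompEquiv_le (e : ι ≃ κ) : ‖lpCompEquiv (E := E) p 𝕜 e‖ ≤ 1 :=
  LinearMap.mkContinuous_norm_le _ zero_le_one _

end Reindex

section ConvDominated

variable {G 𝕜 : Type*} [AddGroup G]

/-- A matrix indexed by a group is convolution-dominated by a summable `g` if the moduli of the
entries on its `j`-th diagonal `{(m, k) | m - k = j}` are at most `g j`. -/
structure ConvDominated [Norm 𝕜] (A : Matrix G G 𝕜) (g : G → ℝ) : Prop where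
  summable : Summable g
  norm_le : ∀ m k, ‖A m k‖ ≤ g (m - k)

namespace ConvDominated

variable {A : Matrix G G 𝕜} {g : G → ℝ}

theorem nonneg [SeminormedAddGroup 𝕜] (hA : ConvDominated A g) (j : G) : 0 ≤ g j := by
  simpa using (norm_nonneg _).trans (hA.norm_le j 0)

theorem conjTranspose [NormedField 𝕜] [StarRing 𝕜] [NormedStarGroup 𝕜] (hA : ConvDominated A g) :
    ConvDominated A.conjTranspose fun j => g (-j) where
  summable := (Equiv.neg G).summable_iff.2 hA.summable
  norm_le m k := by simpa using hA.norm_le k m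

variable [NontriviallyNormedField 𝕜] (hA : ConvDominated A g) (p : ENNReal) [Fact (1 ≤ p)]

/-- The `j`-th diagonal of a convolution-dominated matrix, as a translation by `j` followed by a
multiplication operator. -/
noncomputable def diagonalCLM (j : G) : lp (fun _ : G => 𝕜) p →L[𝕜] lp (fun _ : G => 𝕜) p :=
  (lp.mapCLM p (fun m => ContinuousLinearMap.mul 𝕜 𝕜 (A m (-j + m))) (hA.nonneg j) fun m => by
    simpa using hA.norm_le m (-j + m)) ∘L lpCompEquiv p 𝕜 (Equiv.addLeft (-j))

theorem norm_diagonalCLM_le (j : G) : ‖hA.diagonalCLM p j‖ ≤ g j := by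
  refine (ContinuousLinearMap.opNorm_comp_le _ _).trans ?_
  calc _ ≤ g j * 1 := mul_le_mul (lp.norm_mapCLM_le ..) (norm_lpCompEquiv_le ..) (norm_nonneg _)
        (hA.nonneg j)
    _ = g j := mul_one _

/-- The bounded operator on `ℓᵖ` with a given convolution-dominated matrix, defined as the
norm-convergent sum of its diagonals. -/
noncomputable def toCLM : lp (fun _ : G => 𝕜) p →L[𝕜] lp (fun _ : G => 𝕜) p :=
  ∑' j, hA.diagonalCLM p j

theorem norm_toCLM_le : ‖hA.toCLM p‖ ≤ ∑' j, g j :=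
  tsum_of_norm_bounded hA.summable.hasSum (hA.norm_diagonalCLM_le p)

variable [CompleteSpace 𝕜]

theorem hasSum_toCLM_apply (x : lp (fun _ : G => 𝕜) p) (m : G) :
    HasSum (fun k => A m k * x k) (hA.toCLM p x m) := by
  have hdiag : HasSum (hA.diagonalCLM p) (hA.toCLM p) :=
    (Summable.of_norm_bounded hA.summable (hA.norm_diagonalCLM_le p)).hasSum
  have hentry := (hdiag.mapL (ContinuousLinearMap.apply 𝕜 _ x)).mapL (lp.evalCLM 𝕜 _ p m)
  refine (Equiv.hasSum_iff ((Equiv.neg G).trans (Equiv.addRight m))).1 ?_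
  exact hentry

theorem toCLM_single [DecidableEq G] (l : G) (a : 𝕜) (m : G) :
    hA.toCLM p (lp.single p l a) m = A m l * a := by
  refine (hA.hasSum_toCLM_apply p _ m).unique ?_
  convert hasSum_single l fun k hk => ?_
  · simp
  · simp [lp.single_apply, Pi.single_eq_of_ne hk]

end ConvDominated

theorem ConvDominated.adjoint_toCLM {𝕜 : Type*} [RCLike 𝕜] {A : Matrix G G 𝕜} {g : G → ℝ}
    (hA : ConvDominated A g) :
    ContinuousLinearMap.adjoint (hA.toCLM 2) = hA.conjTranspose.toCLM 2 := by
  classical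
  ext x m
  refine HasSum.unique ?_ (hA.conjTranspose.hasSum_toCLM_apply 2 x m)
  have hinner := lp.hasSum_inner (𝕜 := 𝕜) (hA.toCLM 2 (lp.single 2 m 1)) x
  rw [← ContinuousLinearMap.adjoint_inner_right, lp.inner_single_left] at hinner
  simpa [hA.toCLM_single, RCLike.inner_apply, Matrix.conjTranspose_apply, mul_comm] using hinner

end ConvDominated

open scoped NNReal in
theorem antilipschitzWith_of_left_inverses_of_dense {𝕜 E F : Type*} [NontriviallyNormedField 𝕜]
    [NormedAddCommGroup E] [NormedAddCommGroup F] [NormedSpace 𝕜 E] [NormedSpace 𝕜 F]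
    (T : E →L[𝕜] F) {K : ℝ≥0} {D : Set E} (hD : Dense D)
    (hT : ∀ x ∈ D, ∃ S : F →L[𝕜] E, ‖S‖ ≤ K ∧ S (T x) = x) : AntilipschitzWith K T := by
  refine T.antilipschitz_of_bound fun x => ?_
  have hclosed : IsClosed {x | ‖x‖ ≤ K * ‖T x‖} := isClosed_le (by fun_prop) (by fun_prop)
  refine hclosed.closure_subset_iff.2 (fun x hx => ?_) (hD x)
  obtain ⟨S, hS, hSx⟩ := hT x hx
  calc ‖x‖ = ‖S (T x)‖ := by rw [hSx]
    _ ≤ K * ‖T x‖ := S.le_of_opNorm_le hS _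

theorem bijective_of_antilipschitz_of_injective_adjoint {𝕜 E F : Type*} [RCLike 𝕜]
    [NormedAddCommGroup E] [NormedAddCommGroup F] [InnerProductSpace 𝕜 E] [InnerProductSpace 𝕜 F]
    [CompleteSpace E] [CompleteSpace F] (T : E →L[𝕜] F) (hT : ∃ K, AntilipschitzWith K T)
    (hadj : Function.Injective (ContinuousLinearMap.adjoint T)) : Function.Bijective T := by
  refine (ContinuousLinearMap.bijective_iff_dense_range_and_antilipschitz T).2 ⟨?_, hT⟩
  rw [Submodule.topologicalClosure_eq_top_iff, ContinuousLinearMap.orthogonal_range]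
  exact LinearMap.ker_eq_bot.2 hadj

theorem dense_lp_finite_support {ι E : Type*} [NormedAddCommGroup E] {p : ENNReal} [Fact (1 ≤ p)]
    (hp : p ≠ ⊤) : Dense {x : lp (fun _ : ι => E) p | (Function.support x).Finite} := by
  classical
  refine fun x => mem_closure_of_tendsto (lp.hasSum_single hp x) (.of_forall fun s => ?_)
  refine s.finite_toSet.subset fun i hi => ?_
  by_contra his
  refine hi ?_
  rw [lp.coeFn_sum, Finset.sum_apply]
  exact Finset.sum_eq_zero fun j hj =>
    lp.single_apply_ne _ _ _ fun h => his (h ▸ hj)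

section FiniteSections

variable {G 𝕜 : Type*}

/-- The extension of a matrix by zero along an embedding of its index set. -/
noncomputable def zeroExtend {ι : Type*} [Zero 𝕜] (e : ι ↪ G) (B : Matrix ι ι 𝕜) :
    Matrix G G 𝕜 :=
  Function.extend e (fun i => Function.extend e (B i) 0) 0

section

variable {ι : Type*} [Zero 𝕜] (e : ι ↪ G) (B : Matrix ι ι 𝕜)

theorem zeroExtend_apply (i : ι) : zeroExtend e B (e i) = Function.extend e (B i) 0 :=
  e.injective.extend_apply _ _ i

theorem zeroExtend_apply_of_notMem {m : G} (hm : m ∉ Set.range e) : zeroExtend e B m = 0 :=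
  Function.extend_apply' _ _ _ hm

theorem zeroExtend_apply_apply_of_notMem (i : ι) {k : G} (hk : k ∉ Set.range e) :
    zeroExtend e B (e i) k = 0 := by
  rw [zeroExtend_apply, Function.extend_apply' _ _ _ hk, Pi.zero_apply]

end

theorem convDominated_zeroExtend [AddGroup G] [NormedField 𝕜] {ι : Type*} {e : ι ↪ G}
    {B : Matrix ι ι 𝕜} {h : G → ℝ} (hsum : Summable h) (h₀ : ∀ j, 0 ≤ h j)
    (hB : ∀ i j, ‖B i j‖ ≤ h (e i - e j)) : ConvDominated (zeroExtend e B) h where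
  summable := hsum
  norm_le m k := by
    by_cases hm : m ∈ Set.range e
    · obtain ⟨i, rfl⟩ := hm
      by_cases hk : k ∈ Set.range e
      · obtain ⟨j, rfl⟩ := hk
        rw [zeroExtend_apply, e.injective.extend_apply]
        exact hB i j
      · simpa [zeroExtend_apply_apply_of_notMem e B i hk] using h₀ (e i - k)
    · simpa [zeroExtend_apply_of_notMem e B hm] using h₀ (m - k)

/-- Arbitrarily large finite sections of `A` have inverses whose entries are dominated by `h`,
uniformly in the section. Sections are enumerated by `Fin N`. -/
def HasDominatedSectionInverses [AddGroup G] [NormedField 𝕜] (A : Matrix G G 𝕜) (h : G → ℝ) :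
    Prop :=
  ∀ s : Finset G, ∃ (N : ℕ) (e : Fin N ↪ G) (B : Matrix (Fin N) (Fin N) 𝕜),
    ↑s ⊆ Set.range e ∧ A.submatrix e e * B = 1 ∧ ∀ i j, ‖B i j‖ ≤ h (e i - e j)

variable [AddGroup G]

theorem HasDominatedSectionInverses.conjTranspose [NormedField 𝕜] [StarRing 𝕜]
    [NormedStarGroup 𝕜] {A : Matrix G G 𝕜} {h : G → ℝ} (hA : HasDominatedSectionInverses A h) :
    HasDominatedSectionInverses A.conjTranspose fun j => h (-j) := by
  intro s
  obtain ⟨N, e, B, hs, hAB, hB⟩ := hA s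
  refine ⟨N, e, B.conjTranspose, hs, ?_, fun i j => ?_⟩
  · rw [← Matrix.conjTranspose_submatrix, ← Matrix.conjTranspose_mul, mul_eq_one_comm.1 hAB,
      Matrix.conjTranspose_one]
  · simpa using hB j i

variable {A : Matrix G G 𝕜} {g h : G → ℝ}

theorem ConvDominated.toCLM_zeroExtend_toCLM [NontriviallyNormedField 𝕜] [CompleteSpace 𝕜]
    {ι : Type*} [Fintype ι] [DecidableEq ι] {e : ι ↪ G} {B : Matrix ι ι 𝕜}
    (hA : ConvDominated A g) (hB : ConvDominated (zeroExtend e B) h)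
    (hBA : B * A.submatrix e e = 1) (p : ENNReal) [Fact (1 ≤ p)] {x : lp (fun _ : G => 𝕜) p}
    (hx : Function.support x ⊆ Set.range e) : hB.toCLM p (hA.toCLM p x) = x := by
  have hAx (j : ι) : hA.toCLM p x (e j) = (A.submatrix e e).mulVec (x ∘ e) j := by
    refine (hA.hasSum_toCLM_apply p x _).unique ?_
    refine (e.injective.hasSum_iff fun k hk => ?_).1 (hasSum_fintype _)
    rw [Function.notMem_support.1 fun h => hk (hx h), mul_zero]
  ext m
  by_cases hm : m ∈ Set.range e
  · obtain ⟨i, rfl⟩ := hm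
    refine (hB.hasSum_toCLM_apply p _ _).unique ?_
    refine (e.injective.hasSum_iff fun k hk => ?_).1 ?_
    · rw [zeroExtend_apply_apply_of_notMem e B i hk, zero_mul]
    · have hBAx : B.mulVec ((A.submatrix e e).mulVec (x ∘ e)) i = x (e i) := by
        rw [Matrix.mulVec_mulVec, hBA, Matrix.one_mulVec, Function.comp_apply]
      rw [← hBAx]
      simpa only [Function.comp_def, zeroExtend_apply, e.injective.extend_apply, hAx]
        using! hasSum_fintype _
  · rw [Function.notMem_support.1 fun h => hm (hx h)]
    refine (hB.hasSum_toCLM_apply p _ _).unique ?_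
    simp [zeroExtend_apply_of_notMem e B hm]

theorem ConvDominated.exists_antilipschitzWith_toCLM [NontriviallyNormedField 𝕜] [CompleteSpace 𝕜]
    (hA : ConvDominated A g) (hsum : Summable h) (h₀ : ∀ j, 0 ≤ h j)
    (hinv : HasDominatedSectionInverses A h) {p : ENNReal} [Fact (1 ≤ p)] (hp : p ≠ ⊤) :
    ∃ K, AntilipschitzWith K (hA.toCLM p) := by
  refine ⟨⟨∑' j, h j, tsum_nonneg h₀⟩,
    antilipschitzWith_of_left_inverses_of_dense _ (dense_lp_finite_support hp) fun x hx => ?_⟩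
  obtain ⟨N, e, B, hs, hAB, hB⟩ := hinv hx.toFinset
  have hB' := convDominated_zeroExtend hsum h₀ hB
  exact ⟨hB'.toCLM p, hB'.norm_toCLM_le p,
    hA.toCLM_zeroExtend_toCLM hB' (mul_eq_one_comm.1 hAB) p (by simpa using hs)⟩

theorem ConvDominated.bijective_toCLM [RCLike 𝕜] (hA : ConvDominated A g) (hsum : Summable h)
    (h₀ : ∀ j, 0 ≤ h j) (hinv : HasDominatedSectionInverses A h) :
    Function.Bijective (hA.toCLM 2) := by
  refine bijective_of_antilipschitz_of_injective_adjoint _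
    (hA.exists_antilipschitzWith_toCLM hsum h₀ hinv ENNReal.ofNat_ne_top) ?_
  obtain ⟨K, hK⟩ := hA.conjTranspose.exists_antilipschitzWith_toCLM
    ((Equiv.neg G).summable_iff.2 hsum) (fun j => h₀ (-j)) hinv.conjTranspose
    (p := 2) ENNReal.ofNat_ne_top
  rw [hA.adjoint_toCLM]
  exact hK.injective

end FiniteSections

section SamplingOperator

theorem memℓp_two_iff {ι E : Type*} [NormedAddCommGroup E] {f : ι → E} :
    Memℓp f 2 ↔ Summable fun i => ‖f i‖ ^ 2 := by
  simpa using memℓp_gen_iff (f := f) (p := 2) (by norm_num)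

theorem tsum_norm_sq_lp_two {ι E : Type*} [NormedAddCommGroup E] (x : lp (fun _ : ι => E) 2) :
    ∑' i, ‖x i‖ ^ 2 = ‖x‖ ^ 2 := by
  simpa using (lp.norm_rpow_eq_tsum (p := 2) (by norm_num) x).symm

variable {c : ℂ} {ι : Type*} {ν : ι → ℝ}
  {T : lp (fun _ : ℤ => ℂ) 2 →L[ℂ] lp (fun _ : ι => ℂ) 2}

theorem isSamplingV2_range (hν : Function.Injective ν)
    (hT : ∀ a i, T a i = gaussShiftSum c a (ν i)) (hanti : ∃ K, AntilipschitzWith K T) :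
    IsSamplingV2 c (Set.range ν) := by
  obtain ⟨K, hK⟩ := hanti
  refine ⟨((K : ℝ) ^ 2 + 1)⁻¹, by positivity, ‖T‖ ^ 2 + 1, by positivity, fun coef hcoef => ?_⟩
  let a : lp (fun _ : ℤ => ℂ) 2 := ⟨coef, memℓp_two_iff.2 hcoef⟩
  have hcoef_norm : ∑' n, ‖coef n‖ ^ 2 = ‖a‖ ^ 2 := tsum_norm_sq_lp_two a
  have hsamples : ∑' t : Set.range ν, ‖gaussShiftSum c coef t‖ ^ 2 = ‖T a‖ ^ 2 := by
    rw [← tsum_norm_sq_lp_two, ← (Equiv.ofInjective ν hν).tsum_eq]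
    simp only [Equiv.ofInjective_apply, hT, a]
  have hlower : ‖a‖ ≤ K * ‖T a‖ := hK.le_mul_norm (map_zero T) a
  have hupper : ‖T a‖ ≤ ‖T‖ * ‖a‖ := T.le_opNorm a
  rw [hcoef_norm, hsamples]
  constructor
  · rw [inv_mul_le_iff₀ (by positivity)]
    calc ‖a‖ ^ 2 ≤ (K * ‖T a‖) ^ 2 := by gcongr
      _ ≤ ((K : ℝ) ^ 2 + 1) * ‖T a‖ ^ 2 := by nlinarith [sq_nonneg ‖T a‖]
  · calc ‖T a‖ ^ 2 ≤ (‖T‖ * ‖a‖) ^ 2 := by gcongr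
      _ ≤ (‖T‖ ^ 2 + 1) * ‖a‖ ^ 2 := by nlinarith [sq_nonneg ‖a‖]

theorem isInterpolatingV2_range (hν : Function.Injective ν)
    (hT : ∀ a i, T a i = gaussShiftSum c a (ν i)) (hsurj : Function.Surjective T) :
    IsInterpolatingV2 c (Set.range ν) := by
  intro b hb
  have hb' : Summable fun i => ‖b (Equiv.ofInjective ν hν i)‖ ^ 2 :=
    (Equiv.ofInjective ν hν).summable_iff.2 hb
  obtain ⟨a, ha⟩ := hsurj ⟨_, memℓp_two_iff.2 hb'⟩
  refine ⟨a, memℓp_two_iff.1 a.2, (Equiv.ofInjective ν hν).surjective.forall.2 fun i => ?_⟩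
  rw [Equiv.ofInjective_apply, ← hT, ha]
  rfl

theorem isCompleteInterpolatingV2_range (hν : Function.Injective ν)
    (hT : ∀ a i, T a i = gaussShiftSum c a (ν i)) (hbij : Function.Bijective T) :
    IsCompleteInterpolatingV2 c (Set.range ν) :=
  ⟨isSamplingV2_range hν hT
      ((ContinuousLinearMap.bijective_iff_dense_range_and_antilipschitz T).1 hbij).2,
    isInterpolatingV2_range hν hT hbij.surjective⟩

end SamplingOperator

section ExpEstimates

theorem exp_add_exp_le (x y : ℝ) :
    Real.exp x + Real.exp y ≤ Real.exp (max x y + Real.exp (-|x - y|)) := by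
  wlog hxy : y ≤ x generalizing x y
  · rw [add_comm, max_comm, abs_sub_comm]
    exact this y x (le_of_not_ge hxy)
  rw [max_eq_left hxy, abs_of_nonneg (sub_nonneg.2 hxy), neg_sub]
  calc Real.exp x + Real.exp y = Real.exp x * (Real.exp (y - x) + 1) := by
        rw [mul_add, ← Real.exp_add, add_sub_cancel, mul_one, add_comm]
    _ ≤ Real.exp x * Real.exp (Real.exp (y - x)) := by gcongr; exact Real.add_one_le_exp _
    _ = Real.exp (x + Real.exp (y - x)) := (Real.exp_add _ _).symm

theorem exp_neg_div_le_one_sub {t q : ℝ} (ht : 0 ≤ t) (htq : t ≤ q) (hq : q < 1) :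
    Real.exp (-(t / (1 - q))) ≤ 1 - t := by
  have ht₁ : 0 < 1 - t := by linarith
  calc Real.exp (-(t / (1 - q))) ≤ Real.exp (-(t / (1 - t))) := by gcongr
    _ = Real.exp (1 - (1 - t)⁻¹) := by congr 1; field_simp; ring
    _ ≤ Real.exp (Real.log (1 - t)) := by gcongr; exact Real.one_sub_inv_le_log_of_pos ht₁
    _ = 1 - t := Real.exp_log ht₁

theorem exp_max_sub_le_abs_exp_sub_exp {x y η : ℝ} (hη : 0 < η) (hxy : η ≤ |x - y|) :
    Real.exp (max x y - Real.exp (-|x - y|) / (1 - Real.exp (-η))) ≤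
      |Real.exp x - Real.exp y| := by
  wlog hle : y ≤ x generalizing x y
  · rw [max_comm, abs_sub_comm x y, abs_sub_comm (Real.exp x)]
    exact this (by rwa [abs_sub_comm]) (le_of_not_ge hle)
  have hq : Real.exp (-η) < 1 := by simpa using hη
  calc _ = Real.exp x * Real.exp (-(Real.exp (-|x - y|) / (1 - Real.exp (-η)))) := by
        rw [max_eq_left hle, ← Real.exp_add, ← sub_eq_add_neg]
    _ ≤ Real.exp x * (1 - Real.exp (-|x - y|)) := by
        gcongr
        exact exp_neg_div_le_one_sub (Real.exp_nonneg _) (by gcongr) hq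
    _ = Real.exp x - Real.exp y := by
        rw [abs_of_nonneg (sub_nonneg.2 hle), mul_sub, mul_one, ← Real.exp_add]
        ring_nf
    _ ≤ |Real.exp x - Real.exp y| := le_abs_self _

theorem prod_exp_add_exp_div_abs_exp_sub_exp_le {ι : Type*} {s : Finset ι} {y : ι → ℝ} {v η : ℝ}
    (u : ℝ) (hη : 0 < η) (hv : ∀ m ∈ s, η ≤ |v - y m|) :
    ∏ m ∈ s, (Real.exp u + Real.exp (y m)) / |Real.exp v - Real.exp (y m)| ≤
      Real.exp (∑ m ∈ s, (max u (y m) - max v (y m)) + ∑ m ∈ s, Real.exp (-|u - y m|) +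
        (∑ m ∈ s, Real.exp (-|v - y m|)) / (1 - Real.exp (-η))) := by
  rw [Finset.sum_div, ← Finset.sum_add_distrib, ← Finset.sum_add_distrib, Real.exp_sum]
  refine Finset.prod_le_prod (fun m _ => by positivity) fun m hm => ?_
  calc _ ≤ Real.exp (max u (y m) + Real.exp (-|u - y m|)) /
        Real.exp (max v (y m) - Real.exp (-|v - y m|) / (1 - Real.exp (-η))) := by
        gcongr
        · exact exp_add_exp_le _ _
        · exact exp_max_sub_le_abs_exp_sub_exp hη (hv m hm)
    _ = _ := by rw [← Real.exp_sub]; ring_nf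

theorem summable_exp_neg_mul_abs {η : ℝ} (hη : 0 < η) :
    Summable fun j : ℤ => Real.exp (-(η * |(j : ℝ)|)) := by
  have hnat : Summable fun n : ℕ => Real.exp (-(η * n)) := by
    simpa [mul_comm] using Real.summable_exp_nat_mul_iff.2 (neg_neg_of_pos hη)
  exact .of_nat_of_neg (by simpa using hnat) (by simpa using hnat)

section SeparatedExponents

variable {y : ℕ → ℝ} {η : ℝ}

theorem le_abs_sub_of_ne (hη : 0 ≤ η) (hy : ∀ i m : ℕ, η * |(i : ℝ) - m| ≤ |y i - y m|) {n m : ℕ}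
    (hnm : n ≠ m) : η ≤ |y n - y m| := by
  have hone : 1 ≤ |(n : ℝ) - m| := by
    exact_mod_cast Int.one_le_abs (sub_ne_zero.2 (Nat.cast_injective.ne hnm))
  exact (le_mul_of_one_le_right hη hone).trans (hy n m)

theorem sum_exp_neg_abs_sub_le (hη : 0 < η) (hy : ∀ i m : ℕ, η * |(i : ℝ) - m| ≤ |y i - y m|)
    (S : Finset ℕ) (k : ℕ) :
    ∑ m ∈ S, Real.exp (-|y k - y m|) ≤ ∑' j : ℤ, Real.exp (-(η * |(j : ℝ)|)) := by
  have hinj : Function.Injective fun m : ℕ => (k : ℤ) - m := fun m n h => by simpa using h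
  calc ∑ m ∈ S, Real.exp (-|y k - y m|) ≤ ∑ m ∈ S, Real.exp (-(η * |(k : ℝ) - m|)) := by
        gcongr
        exact hy k _
    _ ≤ ∑' j : ℤ, Real.exp (-(η * |(j : ℝ)|)) := by
        simpa using (summable_exp_neg_mul_abs hη).sum_le_tsum (S.map ⟨_, hinj⟩)
          fun j _ => Real.exp_nonneg _

/-- A bound, depending only on the separation `η` of the exponents `y`, for the error made when
`∏ m, (e^{y k} + e^{y m}) / |e^{y n} - e^{y m}|` is replaced by its tropical approximation
`∏ m, e^{max (y k) (y m) - max (y n) (y m)}`. -/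
noncomputable def tropicalError (η : ℝ) : ℝ :=
  (1 + (1 - Real.exp (-η))⁻¹) * ∑' j : ℤ, Real.exp (-(η * |(j : ℝ)|))

theorem prod_erase_exp_add_exp_div_le (hη : 0 < η)
    (hy : ∀ i m : ℕ, η * |(i : ℝ) - m| ≤ |y i - y m|) (S : Finset ℕ) (k n : ℕ) :
    ∏ m ∈ S.erase n, (Real.exp (y k) + Real.exp (y m)) / |Real.exp (y n) - Real.exp (y m)| ≤
      Real.exp (∑ m ∈ S.erase n, (max (y k) (y m) - max (y n) (y m)) + tropicalError η) := by
  have hgap : ∀ m ∈ S.erase n, η ≤ |y n - y m| := fun m hm =>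
    le_abs_sub_of_ne hη.le hy (Finset.ne_of_mem_erase hm).symm
  have hq : 0 < 1 - Real.exp (-η) := by simpa using hη
  refine (prod_exp_add_exp_div_abs_exp_sub_exp_le (y k) hη hgap).trans ?_
  rw [tropicalError, add_mul, one_mul, inv_mul_eq_div, add_assoc]
  gcongr <;> exact sum_exp_neg_abs_sub_le hη hy _ _

end SeparatedExponents

end ExpEstimates

section LagrangeCoefficients

theorem norm_coeff_prod_X_sub_C_mul_pow_le {R ι : Type*} [NormedCommRing R] [NormOneClass R]
    (S : Finset ι) (z : ι → R) {s : ℝ} (hs : 0 ≤ s) (k : ℕ) :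
    ‖(∏ m ∈ S, (Polynomial.X - Polynomial.C (z m))).coeff k‖ * s ^ k ≤
      ∏ m ∈ S, (s + ‖z m‖) := by
  classical
  induction S using Finset.induction_on generalizing k with
  | empty => cases k <;> simp [Polynomial.coeff_one]
  | insert i S hi ih =>
    rw [Finset.prod_insert hi, Finset.prod_insert hi]
    set Q := ∏ m ∈ S, (Polynomial.X - Polynomial.C (z m))
    set M := ∏ m ∈ S, (s + ‖z m‖)
    have : 0 ≤ M := by positivity
    have hlow : ‖z i * Q.coeff k‖ * s ^ k ≤ ‖z i‖ * M := by
      calc ‖z i * Q.coeff k‖ * s ^ k ≤ ‖z i‖ * (‖Q.coeff k‖ * s ^ k) := by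
            rw [← mul_assoc]; gcongr; exact norm_mul_le _ _
        _ ≤ ‖z i‖ * M := by gcongr; exact ih k
    rw [sub_mul, Polynomial.coeff_sub, Polynomial.coeff_C_mul, add_mul]
    cases k with
    | zero =>
      rw [Polynomial.mul_coeff_zero, Polynomial.coeff_X_zero, zero_mul, zero_sub, norm_neg]
      exact hlow.trans (le_add_of_nonneg_left (by positivity))
    | succ k =>
      rw [Polynomial.coeff_X_mul]
      calc ‖Q.coeff k - z i * Q.coeff (k + 1)‖ * s ^ (k + 1)
          ≤ (‖Q.coeff k‖ + ‖z i * Q.coeff (k + 1)‖) * s ^ (k + 1) := by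
            gcongr; exact norm_sub_le _ _
        _ = s * (‖Q.coeff k‖ * s ^ k) + ‖z i * Q.coeff (k + 1)‖ * s ^ (k + 1) := by ring
        _ ≤ s * M + ‖z i‖ * M := by gcongr; exact ih k

theorem norm_coeff_lagrangeBasis_mul_pow_le {K ι : Type*} [NormedField K] [DecidableEq ι]
    (S : Finset ι) (z : ι → K) (n : ι) {s : ℝ} (hs : 0 ≤ s) (k : ℕ) :
    ‖(Lagrange.basis S z n).coeff k‖ * s ^ k ≤
      ∏ m ∈ S.erase n, (s + ‖z m‖) / ‖z n - z m‖ := by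
  have hfactor : Lagrange.basis S z n = Polynomial.C (∏ m ∈ S.erase n, (z n - z m)⁻¹) *
      ∏ m ∈ S.erase n, (Polynomial.X - Polynomial.C (z m)) := by
    rw [map_prod, ← Finset.prod_mul_distrib]
    rfl
  calc _ = (∏ m ∈ S.erase n, ‖z n - z m‖⁻¹) *
        (‖(∏ m ∈ S.erase n, (Polynomial.X - Polynomial.C (z m))).coeff k‖ * s ^ k) := by
        simp only [hfactor, Polynomial.coeff_C_mul, norm_mul, norm_prod, norm_inv, mul_assoc]
    _ ≤ (∏ m ∈ S.erase n, ‖z n - z m‖⁻¹) * ∏ m ∈ S.erase n, (s + ‖z m‖) := by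
        gcongr
        exact norm_coeff_prod_X_sub_C_mul_pow_le _ z hs k
    _ = _ := by
        rw [← Finset.prod_mul_distrib]
        exact Finset.prod_congr rfl fun m _ => inv_mul_eq_div _ _

theorem norm_coeff_lagrangeBasis_mul_exp_pow_le {K : Type*} [NormedField K] {z : ℕ → K}
    {y : ℕ → ℝ} {η : ℝ} (hη : 0 < η) (hy : ∀ i m : ℕ, η * |(i : ℝ) - m| ≤ |y i - y m|)
    (hz : ∀ m, ‖z m‖ = Real.exp (y m)) (S : Finset ℕ) (k n j : ℕ) :
    ‖(Lagrange.basis S z n).coeff j‖ * Real.exp (y k) ^ j ≤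
      Real.exp (∑ m ∈ S.erase n, (max (y k) (y m) - max (y n) (y m)) + tropicalError η) := by
  have hne : ∀ m ∈ S.erase n, 0 < |Real.exp (y n) - Real.exp (y m)| := fun m hm => by
    have hgap := hη.trans_le (le_abs_sub_of_ne hη.le hy (Finset.ne_of_mem_erase hm).symm)
    exact abs_sub_pos.2 (Real.exp_injective.ne (abs_sub_pos.1 hgap))
  calc _ ≤ ∏ m ∈ S.erase n, (Real.exp (y k) + ‖z m‖) / ‖z n - z m‖ :=
        norm_coeff_lagrangeBasis_mul_pow_le S z n (Real.exp_nonneg _) j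
    _ ≤ ∏ m ∈ S.erase n,
          (Real.exp (y k) + Real.exp (y m)) / |Real.exp (y n) - Real.exp (y m)| := by
        gcongr with m hm
        · exact hne m hm
        · exact (hz m).le
        · rw [← hz, ← hz]
          exact abs_norm_sub_norm_le _ _
    _ ≤ _ := prod_erase_exp_add_exp_div_le hη hy S k n

end LagrangeCoefficients

section SectionEnergy

variable {x : ℕ → ℝ}

/-- The discrete logarithmic energy `k² - 2k x_k + 2 ∑_{m < N} max(x_k, x_m)` of the index `k` in
the section `{0, …, N - 1}` with nodes `x`. Differences of energies are the exponents governing the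
entries of the inverse of a Gaussian section. -/
def sectionEnergy (x : ℕ → ℝ) (N k : ℕ) : ℝ :=
  k ^ 2 - 2 * k * x k + 2 * ∑ m ∈ Finset.range N, max (x k) (x m)

theorem sectionEnergy_succ (hx : Monotone x) {N k : ℕ} (hk : k < N) :
    sectionEnergy x N (k + 1) = sectionEnergy x N k + (2 * k + 1 - 2 * x k) := by
  have hmax : ∑ m ∈ Finset.range N, (max (x (k + 1)) (x m) - max (x k) (x m)) =
      (k + 1) * (x (k + 1) - x k) := by
    rw [← Finset.sum_range_add_sum_Ico _ (Nat.succ_le_of_lt hk)]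
    have hlow : ∀ m ∈ Finset.range (k + 1),
        max (x (k + 1)) (x m) - max (x k) (x m) = x (k + 1) - x k := fun m hm => by
      have hmk : m ≤ k := Nat.lt_succ_iff.1 (Finset.mem_range.1 hm)
      rw [max_eq_left (hx (hmk.trans k.le_succ)), max_eq_left (hx hmk)]
    have hhigh : ∀ m ∈ Finset.Ico (k + 1) N, max (x (k + 1)) (x m) - max (x k) (x m) = 0 :=
      fun m hm => by
      have hkm : k + 1 ≤ m := (Finset.mem_Ico.1 hm).1
      rw [max_eq_right (hx hkm), max_eq_right (hx (k.le_succ.trans hkm)), sub_self]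
    rw [Nat.succ_eq_add_one, Finset.sum_congr rfl hlow, Finset.sum_eq_zero hhigh]
    simp [mul_sub]
  rw [Finset.sum_sub_distrib] at hmax
  simp only [sectionEnergy, Nat.cast_add, Nat.cast_one]
  linear_combination 2 * hmax

variable {d : ℝ} (hx : ∀ n, |x n - n| ≤ d)
include hx

theorem monotone_of_abs_sub_natCast_le (hd : d ≤ 1 / 2) : Monotone x :=
  monotone_nat_of_le_succ fun n => by
    have h₁ := abs_le.1 (hx n)
    have h₂ := abs_le.1 (hx (n + 1))
    push_cast at h₂
    linarith

theorem mul_sub_le_sectionEnergy_sub (hd : d ≤ 1 / 2) {N k n : ℕ} (hkn : k ≤ n) (hn : n ≤ N) :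
    (1 - 2 * d) * (n - k) ≤ sectionEnergy x N n - sectionEnergy x N k := by
  induction n, hkn using Nat.le_induction with
  | base => simp
  | succ n _ ih =>
    have hsucc := sectionEnergy_succ (monotone_of_abs_sub_natCast_le hx hd) (Nat.lt_of_succ_le hn)
    have hnode := abs_le.1 (hx n)
    push_cast
    linarith [ih (Nat.le_of_succ_le hn)]

theorem sectionEnergy_sub_le (hd : d ≤ 1 / 2) {N k n : ℕ} (hkn : k ≤ n) (hn : n ≤ N) :
    sectionEnergy x N n - sectionEnergy x N k ≤ 2 * (x n - x k) - (1 - 2 * d) * (n - k) := by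
  induction n, hkn using Nat.le_induction with
  | base => simp
  | succ n _ ih =>
    have hsucc := sectionEnergy_succ (monotone_of_abs_sub_natCast_le hx hd) (Nat.lt_of_succ_le hn)
    have hnode := abs_le.1 (hx (n + 1))
    push_cast at hnode ⊢
    linarith [ih (Nat.le_of_succ_le hn)]

theorem sectionEnergy_sub_add_le (hd : d ≤ 1 / 2) {N k n : ℕ} (hk : k < N) (hn : n < N) :
    sectionEnergy x N k - sectionEnergy x N n + 2 * (x n - max (x k) (x n)) ≤
      -((1 - 2 * d) * |(k : ℝ) - n|) := by
  have hmono := monotone_of_abs_sub_natCast_le hx hd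
  rcases le_total k n with hkn | hnk
  · have := mul_sub_le_sectionEnergy_sub hx hd hkn hn.le
    rw [max_eq_right (hmono hkn), abs_of_nonpos (by simpa using hkn)]
    linarith
  · have := sectionEnergy_sub_le hx hd hnk hk.le
    rw [max_eq_left (hmono hnk), abs_of_nonneg (by simpa using hnk)]
    linarith

theorem sq_add_sq_add_sum_max_sub_max_le (hd : d ≤ 1 / 2) {N k n : ℕ} (hk : k < N) (hn : n < N) :
    k ^ 2 + x n ^ 2 - 2 * k * x k +
        2 * ∑ m ∈ (Finset.range N).erase n, (max (x k) (x m) - max (x n) (x m)) ≤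
      d ^ 2 - (1 - 2 * d) * |(k : ℝ) - n| := by
  have henergy := sectionEnergy_sub_add_le hx hd hk hn
  have hnode : (x n - n) ^ 2 ≤ d ^ 2 := sq_le_sq' (abs_le.1 (hx n)).1 (abs_le.1 (hx n)).2
  rw [Finset.sum_erase_eq_sub (Finset.mem_range.2 hn), max_self, Finset.sum_sub_distrib]
  simp only [sectionEnergy] at henergy
  linarith

end SectionEnergy

section GaussianMatrix

/-- The matrix `(e^{-c(ν_i - μ_j)²})_{i, j}` of samples at `ν` of the Gaussians centred at `μ`. -/
noncomputable def gaussMatrix {ι κ : Type*} (c : ℂ) (ν : ι → ℝ) (μ : κ → ℝ) : Matrix ι κ ℂ :=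
  .of fun i j => Complex.exp (-c * ((ν i : ℂ) - μ j) ^ 2)

theorem norm_gaussMatrix_apply {ι κ : Type*} (c : ℂ) (ν : ι → ℝ) (μ : κ → ℝ) (i : ι) (j : κ) :
    ‖gaussMatrix c ν μ i j‖ = Real.exp (-c.re * (ν i - μ j) ^ 2) := by
  simp only [gaussMatrix, Matrix.of_apply]
  rw [Complex.norm_exp, ← Complex.ofReal_sub, ← Complex.ofReal_pow, Complex.re_mul_ofReal,
    Complex.neg_re]

theorem mul_abs_le_sq_add {s d : ℝ} (hs : |s| ≤ d) (j : ℤ) :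
    (1 - 2 * d) * |(j : ℝ)| ≤ (s + j) ^ 2 := by
  have hsj : -(d * |(j : ℝ)|) ≤ s * j := by
    refine neg_le_of_abs_le ?_
    rw [abs_mul]
    gcongr
  have hj : |(j : ℝ)| ≤ (j : ℝ) ^ 2 := by
    rw [← sq_abs]
    exact_mod_cast Int.le_self_sq |j|
  nlinarith [sq_nonneg s]

theorem convDominated_gaussMatrix {c : ℂ} (hc : 0 < c.re) {ν : ℤ → ℝ} {d : ℝ} (hd : d < 1 / 2)
    (hν : ∀ n, |ν n - n| ≤ d) :
    ConvDominated (gaussMatrix c ν fun k : ℤ => (k : ℝ))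
      fun j => Real.exp (-(c.re * (1 - 2 * d) * |(j : ℝ)|)) where
  summable := summable_exp_neg_mul_abs (mul_pos hc (by linarith))
  norm_le n k := by
    have hexp : (1 - 2 * d) * |((n - k : ℤ) : ℝ)| ≤ (ν n - k) ^ 2 := by
      convert mul_abs_le_sq_add (hν n) (n - k) using 2
      push_cast
      ring
    rw [norm_gaussMatrix_apply, neg_mul, mul_assoc]
    gcongr

theorem mul_abs_sub_le_abs_sub {s t d : ℝ} {k m : ℤ} (hs : |s - k| ≤ d) (ht : |t - m| ≤ d) :
    (1 - 2 * d) * |(k : ℝ) - m| ≤ |s - t| := by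
  rcases eq_or_ne k m with rfl | hkm
  · simp
  have hd : 0 ≤ d := (abs_nonneg _).trans hs
  have hone : 1 ≤ |(k : ℝ) - m| := by
    exact_mod_cast Int.one_le_abs (sub_ne_zero.2 hkm)
  have htri : |(k : ℝ) - m| ≤ |s - t| + 2 * d := by
    calc |(k : ℝ) - m| = |(s - t) - (s - k) + (t - m)| := by ring_nf
      _ ≤ |s - t| + |s - k| + |t - m| := (abs_add_le _ _).trans (by gcongr; exact abs_sub _ _)
      _ ≤ |s - t| + 2 * d := by linarith
  nlinarith

theorem injective_of_abs_sub_intCast_le {ν : ℤ → ℝ} {d : ℝ} (hd : d < 1 / 2)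
    (hν : ∀ n, |ν n - n| ≤ d) : Function.Injective ν := fun n m hnm => by
  have hsep := mul_abs_sub_le_abs_sub (hν n) (hν m)
  rw [hnm, sub_self, abs_zero] at hsep
  have habs : |(n : ℝ) - m| ≤ 0 := nonpos_of_mul_nonpos_right hsep (by linarith)
  exact_mod_cast sub_eq_zero.1 (abs_nonpos_iff.1 habs)

/-- The Vandermonde node `e^{2cx}` attached to a sampling point `x`: the Gaussian matrix factors as
`e^{-c(x-k)²} = e^{-cx²} (e^{2cx})^k e^{-ck²}`. -/
noncomputable def gaussNode (c : ℂ) (x : ℝ) : ℂ := Complex.exp (2 * c * x)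

theorem norm_gaussNode (c : ℂ) (x : ℝ) : ‖gaussNode c x‖ = Real.exp (2 * c.re * x) := by
  rw [gaussNode, Complex.norm_exp, Complex.re_mul_ofReal]
  simp

theorem gaussNode_injective {c : ℂ} (hc : c.re ≠ 0) : Function.Injective (gaussNode c) := by
  intro x y hxy
  have hnorm := congrArg norm hxy
  rw [norm_gaussNode, norm_gaussNode, Real.exp_eq_exp] at hnorm
  exact mul_left_cancel₀ (mul_ne_zero two_ne_zero hc) hnorm

theorem exp_mul_exp_eq_mul_gaussNode_pow (c : ℂ) (x y : ℝ) (k : ℕ) :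
    Complex.exp (-c * ((x : ℂ) - k) ^ 2) * Complex.exp (c * ((k : ℂ) ^ 2 + (y : ℂ) ^ 2)) =
      Complex.exp (c * ((y : ℂ) ^ 2 - (x : ℂ) ^ 2)) * gaussNode c x ^ k := by
  rw [gaussNode, ← Complex.exp_nat_mul, ← Complex.exp_add, ← Complex.exp_add]
  ring_nf

/-- The inverse of the Gaussian section `(e^{-c(x_n - k)²})_{n, k < N}`, obtained from Lagrange
interpolation at the nodes `e^{2c x_n}`. -/
noncomputable def gaussSectionInv (c : ℂ) (x : ℕ → ℝ) (N : ℕ) : Matrix (Fin N) (Fin N) ℂ :=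
  .of fun k n => Complex.exp (c * ((k : ℂ) ^ 2 + (x n : ℂ) ^ 2)) *
    (Lagrange.basis (Finset.range N) (fun m => gaussNode c (x m)) n).coeff k

theorem gaussMatrix_mul_gaussSectionInv {c : ℂ} (hc : c.re ≠ 0) {x : ℕ → ℝ}
    (hx : Function.Injective x) (N : ℕ) :
    gaussMatrix c (fun n : Fin N => x n) (fun k : Fin N => (k : ℝ)) * gaussSectionInv c x N =
      1 := by
  have hz : Set.InjOn (fun m => gaussNode c (x m)) (Finset.range N) :=
    ((gaussNode_injective hc).comp hx).injOn
  ext n l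
  set L := Lagrange.basis (Finset.range N) (fun m => gaussNode c (x m)) l
  have hl : (l : ℕ) ∈ Finset.range N := Finset.mem_range.2 l.2
  have hL : L.natDegree < N := by
    rw [Lagrange.natDegree_basis hz hl, Finset.card_range]
    exact Nat.sub_lt l.pos one_pos
  have heval : (gaussMatrix c (fun n : Fin N => x n) (fun k : Fin N => (k : ℝ)) *
      gaussSectionInv c x N) n l =
      Complex.exp (c * (x l ^ 2 - x n ^ 2)) * L.eval (gaussNode c (x n)) := by
    rw [Polynomial.eval_eq_sum_range' hL, ← Fin.sum_univ_eq_sum_range, Finset.mul_sum,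
      Matrix.mul_apply]
    refine Finset.sum_congr rfl fun k _ => ?_
    simp only [gaussMatrix, gaussSectionInv, Matrix.of_apply, Complex.ofReal_natCast]
    rw [← mul_assoc, exp_mul_exp_eq_mul_gaussNode_pow, mul_right_comm, mul_assoc]
  rw [heval]
  rcases eq_or_ne n l with rfl | hnl
  · simp [L, Lagrange.eval_basis_self hz hl]
  · have hzero : L.eval (gaussNode c (x n)) = 0 :=
      Lagrange.eval_basis_of_ne (v := fun m => gaussNode c (x m))
        (Fin.val_injective.ne hnl.symm) (Finset.mem_range.2 n.2)
    rw [Matrix.one_apply_ne hnl, hzero, mul_zero]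

theorem norm_gaussSectionInv_le {c : ℂ} (hc : 0 < c.re) {x : ℕ → ℝ} {d : ℝ} (hd : d < 1 / 2)
    (hx : ∀ n, |x n - n| ≤ d) {N : ℕ} (k n : Fin N) :
    ‖gaussSectionInv c x N k n‖ ≤ Real.exp (c.re * d ^ 2 +
      tropicalError (2 * c.re * (1 - 2 * d)) - c.re * (1 - 2 * d) * |(k : ℝ) - n|) := by
  set τ := tropicalError (2 * c.re * (1 - 2 * d))
  have hη : 0 < 2 * c.re * (1 - 2 * d) := mul_pos (by positivity) (by linarith)
  have hsep (i m : ℕ) :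
      2 * c.re * (1 - 2 * d) * |(i : ℝ) - m| ≤ |2 * c.re * x i - 2 * c.re * x m| := by
    rw [← mul_sub, abs_mul, abs_of_pos (by positivity : 0 < 2 * c.re), mul_assoc]
    gcongr
    exact mul_abs_sub_le_abs_sub (k := i) (m := m) (hx i) (hx m)
  have hcoeff := norm_coeff_lagrangeBasis_mul_exp_pow_le hη hsep
    (fun m => norm_gaussNode c (x m)) (Finset.range N) k n k
  simp only [← mul_max_of_nonneg _ _ (by positivity : 0 ≤ 2 * c.re), ← mul_sub,
    ← Finset.mul_sum] at hcoeff
  have hexponent := sq_add_sq_add_sum_max_sub_max_le hx hd.le k.2 n.2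
  set σ := ∑ m ∈ (Finset.range N).erase n, (max (x k) (x m) - max (x n) (x m))
  have hphase : ‖Complex.exp (c * ((k : ℂ) ^ 2 + (x n : ℂ) ^ 2))‖ =
      Real.exp (c.re * (k ^ 2 + x n ^ 2 - 2 * k * x k)) * Real.exp (2 * c.re * x k) ^ (k : ℕ) := by
    rw [Complex.norm_exp, ← Real.exp_nat_mul, ← Real.exp_add]
    norm_cast
    rw [Complex.re_mul_ofReal]
    push_cast
    ring_nf
  calc ‖gaussSectionInv c x N k n‖
      = Real.exp (c.re * (k ^ 2 + x n ^ 2 - 2 * k * x k)) *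
          (‖(Lagrange.basis (Finset.range N) (fun m => gaussNode c (x m)) n).coeff k‖ *
            Real.exp (2 * c.re * x k) ^ (k : ℕ)) := by
        rw [gaussSectionInv, Matrix.of_apply, norm_mul, hphase]
        ring
    _ ≤ Real.exp (c.re * (k ^ 2 + x n ^ 2 - 2 * k * x k)) *
          Real.exp (2 * c.re * σ + τ) := by gcongr
    _ = Real.exp (c.re * (k ^ 2 + x n ^ 2 - 2 * k * x k + 2 * σ) + τ) := by
        rw [← Real.exp_add]
        ring_nf
    _ ≤ Real.exp (c.re * (d ^ 2 - (1 - 2 * d) * |(k : ℝ) - n|) + τ) := by gcongr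
    _ = _ := by ring_nf

theorem exists_forall_mem_eq_add_fin (s : Finset ℤ) :
    ∃ (p : ℤ) (N : ℕ), ∀ k ∈ s, ∃ i : Fin N, p + i = k := by
  obtain ⟨p, hp⟩ := s.bddBelow
  obtain ⟨q, hq⟩ := s.bddAbove
  refine ⟨p, (q - p + 1).toNat, fun k hk => ?_⟩
  have hpk : p ≤ k := hp hk
  have hkq : k ≤ q := hq hk
  exact ⟨⟨(k - p).toNat, by omega⟩, by simp [hpk]⟩

theorem hasDominatedSectionInverses_gaussMatrix {c : ℂ} (hc : 0 < c.re) {ν : ℤ → ℝ} {d : ℝ}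
    (hd : d < 1 / 2) (hν : ∀ n, |ν n - n| ≤ d) :
    HasDominatedSectionInverses (gaussMatrix c ν fun k : ℤ => (k : ℝ)) fun j =>
      Real.exp (c.re * d ^ 2 + tropicalError (2 * c.re * (1 - 2 * d)) -
        c.re * (1 - 2 * d) * |(j : ℝ)|) := by
  intro s
  obtain ⟨p, N, hs⟩ := exists_forall_mem_eq_add_fin s
  let e : Fin N ↪ ℤ :=
    Fin.valEmbedding.trans (Nat.castEmbedding.trans (addLeftEmbedding p))
  have he (i : Fin N) : e i = p + i := rfl
  let x : ℕ → ℝ := fun i => ν (p + i) - p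
  have hx (i : ℕ) : |x i - i| ≤ d := by
    simpa [x, sub_sub] using hν (p + i)
  have hinj : Function.Injective x := fun i j hij => by
    simpa using injective_of_abs_sub_intCast_le hd hν (sub_left_injective hij)
  have hsection : (gaussMatrix c ν fun k : ℤ => (k : ℝ)).submatrix e e =
      gaussMatrix c (fun n : Fin N => x n) fun k : Fin N => (k : ℝ) := by
    ext i j
    simp [gaussMatrix, x, he, sub_sub]
  refine ⟨N, e, gaussSectionInv c x N, hs, ?_, fun k n => ?_⟩
  · rw [hsection, gaussMatrix_mul_gaussSectionInv hc.ne' hinj]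
  · simpa [he] using norm_gaussSectionInv_le hc hd hx k n

end GaussianMatrix

/-- Kadets-type corollary: if `|δ_n| ≤ δ < 1/2` for all `n ∈ ℤ`, then
`{n + δ_n : n ∈ ℤ}` is a complete interpolating sequence for `V²_c`. -/
theorem statement8 (c : ℂ) (hc : 0 < c.re) (δ : ℤ → ℝ) (d : ℝ) (hd : d < 1 / 2)
    (hδ : ∀ n : ℤ, |δ n| ≤ d) :
    IsCompleteInterpolatingV2 c (Set.range fun n : ℤ => (n : ℝ) + δ n) := by
  have hν (n : ℤ) : |(n : ℝ) + δ n - n| ≤ d := by simpa using hδ n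
  have hA := convDominated_gaussMatrix hc hd hν
  have hsamples (a : lp (fun _ : ℤ => ℂ) 2) (n : ℤ) :
      hA.toCLM 2 a n = gaussShiftSum c a (n + δ n) := by
    rw [← (hA.hasSum_toCLM_apply 2 a n).tsum_eq]
    simp [gaussShiftSum, gaussMatrix, mul_comm]
  have hsum : Summable fun j : ℤ => Real.exp (c.re * d ^ 2 +
      tropicalError (2 * c.re * (1 - 2 * d)) - c.re * (1 - 2 * d) * |(j : ℝ)|) := by
    simpa only [sub_eq_add_neg, Real.exp_add] using hA.summable.mul_left _
  exact isCompleteInterpolatingV2_range (injective_of_abs_sub_intCast_le hd hν) hsamples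
    (hA.bijective_toCLM hsum (fun _ => Real.exp_nonneg _)
      (hasDominatedSectionInverses_gaussMatrix hc hd hν))
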